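/- arXiv:1708.09358 — 2 statements merged into one kernel-verified Lean document; each statement's English description precedes it below -/
import Mathlib

section
/- The set Q̂₈ = {±id, ±(i;0), ±j', ±k'} is a subgroup of order 8 of the group of bijections of T = ℍ/𝔞, generated by (i;0) and j' = (j;α), and it is isomorphic to the quaternion group Q₈ of order 8; in particular j'∘j' = −id and (i;0)∘j' = k' = (k;α). -/
/- STATEMENT 4: The set Q̂₈ = {±id, ±(i;0), ±j', ±k'} is a subgroup of order 8 of the
group of bijections of T = ℍ/𝔞, generated by (i;0) and j' = (j;α); it is isomorphic to
the quaternion group Q₈; in particular j'∘j' = −id and (i;0)∘j' = k' = (k;α). -/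

open scoped Quaternion

noncomputable def qi : ℍ[ℝ] := ⟨0, 1, 0, 0⟩
noncomputable def qj : ℍ[ℝ] := ⟨0, 0, 1, 0⟩
noncomputable def qk : ℍ[ℝ] := ⟨0, 0, 0, 1⟩
noncomputable def qt : ℍ[ℝ] := (1 + qi + qj + qk) / 2
noncomputable def qα : ℍ[ℝ] := (1 + qi) / 2

/-- The Hurwitz order `𝔞 = ℤ·1 + ℤ·i + ℤ·j + ℤ·t` as an additive subgroup of `ℍ`. -/
noncomputable def hurwitz : AddSubgroup ℍ[ℝ] := AddSubgroup.closure {1, qi, qj, qt}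

/-- The real torus `T = ℍ/𝔞`. -/
noncomputable abbrev T := ℍ[ℝ] ⧸ hurwitz

/-- The class map `ℍ → T = ℍ/𝔞`. -/
noncomputable def π : ℍ[ℝ] → T := QuotientAddGroup.mk

/-!
Left multiplication by `i` and the map `j' = (j;α)` satisfy `j'² = -id = (i;0)²` and
`(i;0) j' (i;0) = j'`: the linear parts obey these relations in `ℍ`, and the translation parts
agree modulo the Hurwitz order because `jα + α` and `iα - α` lie in it. The relations `b² = aⁿ`,
`b a = a⁻¹ b` already force `a²ⁿ = 1`, so they define a homomorphism from the dicyclic group of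
order `4n` onto the subgroup generated by `a` and `b`. It is injective as soon as `a` has order
exactly `2n` and `n ≠ 1`, since `b ∈ ⟨a⟩` would make `a` and `b` commute and force `a² = 1`.
Here `n = 2`, and `a² = -id` is not the identity because not every element of `ℍ` is half an
element of the Hurwitz order.
-/

section Dicyclic

open QuaternionGroup

variable {G : Type*} [Group G] {n : ℕ} {a b : G}

theorem pow_two_mul_eq_one_of_sq_eq_pow (hsq : b ^ 2 = a ^ n) (hconj : SemiconjBy b a a⁻¹) :
    a ^ (2 * n) = 1 := by
  have hcomm : SemiconjBy b (a ^ n) (a ^ n) := hsq ▸ (Commute.refl b).pow_right 2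
  have hinv : a ^ n = (a ^ n)⁻¹ := by
    rw [← inv_pow]
    exact mul_right_cancel (hcomm.eq.symm.trans (hconj.pow_right n).eq)
  rw [mul_comm, pow_mul, sq, mul_eq_one_iff_eq_inv]
  exact hinv

theorem zpow_cast_intCast_zmod {m : ℕ} (ha : a ^ m = 1) (z : ℤ) :
    a ^ ((z : ZMod m).cast : ℤ) = a ^ z := by
  have hdvd : (orderOf a : ℤ) ∣ m := mod_cast orderOf_dvd_of_pow_eq_one ha
  rw [ZMod.coe_intCast, ← zpow_mod_orderOf, Int.emod_emod_of_dvd z hdvd, zpow_mod_orderOf]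

/-- The homomorphism from the dicyclic group of order `4n` (infinite dihedral if `n = 0`) sending
its standard generators `a 1` and `xa 0` to two elements of a group that satisfy the dicyclic
relations. -/
def quaternionGroupLift (hsq : b ^ 2 = a ^ n) (hconj : SemiconjBy b a a⁻¹) :
    QuaternionGroup n →* G :=
  MonoidHom.mk'
    (fun
      | .a i => a ^ (i.cast : ℤ)
      | .xa i => b * a ^ (i.cast : ℤ))
    (by
      have hcast := zpow_cast_intCast_zmod (pow_two_mul_eq_one_of_sq_eq_pow hsq hconj)
      have hswap (z : ℤ) : a ^ z * b = b * a ^ (-z) := by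
        simpa using (hconj.zpow_right (-z)).eq.symm
      rintro (i | i) (j | j) <;> obtain ⟨z, rfl⟩ := ZMod.intCast_surjective i <;>
        obtain ⟨w, rfl⟩ := ZMod.intCast_surjective j
      · simp only [a_mul_a, ← Int.cast_add, hcast, zpow_add]
      · simp only [a_mul_xa, ← Int.cast_sub, hcast]
        rw [← mul_assoc, hswap, mul_assoc, ← zpow_add, neg_add_eq_sub]
      · simp only [xa_mul_a, ← Int.cast_add, hcast, zpow_add, mul_assoc]
      · simp only [xa_mul_xa, ← Int.cast_natCast (R := ZMod (2 * n)), ← Int.cast_add,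
          ← Int.cast_sub, hcast]
        calc a ^ ((n : ℤ) + w - z) = b ^ 2 * a ^ (-z) * a ^ w := by
              rw [hsq, ← zpow_natCast, ← zpow_add, ← zpow_add]; congr 1; ring
          _ = b * (b * a ^ (-z)) * a ^ w := by simp only [sq, mul_assoc]
          _ = b * a ^ z * (b * a ^ w) := by simp only [← hswap, mul_assoc])

variable (hsq : b ^ 2 = a ^ n) (hconj : SemiconjBy b a a⁻¹)

theorem quaternionGroupLift_a (z : ℤ) : quaternionGroupLift hsq hconj (.a z) = a ^ z :=
  zpow_cast_intCast_zmod (pow_two_mul_eq_one_of_sq_eq_pow hsq hconj) z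

theorem quaternionGroupLift_xa (z : ℤ) : quaternionGroupLift hsq hconj (.xa z) = b * a ^ z :=
  congrArg (b * ·) (zpow_cast_intCast_zmod (pow_two_mul_eq_one_of_sq_eq_pow hsq hconj) z)

theorem quaternionGroupLift_a_one : quaternionGroupLift hsq hconj (.a 1) = a := by
  simpa using quaternionGroupLift_a hsq hconj 1

theorem quaternionGroupLift_xa_zero : quaternionGroupLift hsq hconj (.xa 0) = b := by
  simpa using quaternionGroupLift_xa hsq hconj 0

theorem range_quaternionGroupLift :
    (quaternionGroupLift hsq hconj).range = Subgroup.closure {a, b} := by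
  apply le_antisymm
  · have ha : a ∈ Subgroup.closure {a, b} := Subgroup.subset_closure (by simp)
    have hb : b ∈ Subgroup.closure {a, b} := Subgroup.subset_closure (by simp)
    rintro _ ⟨i | i, rfl⟩ <;> obtain ⟨z, rfl⟩ := ZMod.intCast_surjective i
    · rw [quaternionGroupLift_a]
      exact zpow_mem ha z
    · rw [quaternionGroupLift_xa]
      exact mul_mem hb (zpow_mem ha z)
  · rw [Subgroup.closure_le]
    rintro _ (rfl | rfl)
    · exact ⟨.a 1, quaternionGroupLift_a_one hsq hconj⟩
    · exact ⟨.xa 0, quaternionGroupLift_xa_zero hsq hconj⟩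

theorem quaternionGroupLift_injective (hn : n ≠ 1) (ha : orderOf a = 2 * n) :
    Function.Injective (quaternionGroupLift hsq hconj) := by
  rw [injective_iff_map_eq_one]
  rintro (i | i) hi <;> obtain ⟨z, rfl⟩ := ZMod.intCast_surjective i
  · rw [quaternionGroupLift_a, ← orderOf_dvd_iff_zpow_eq_one, ha] at hi
    rw [(ZMod.intCast_zmod_eq_zero_iff_dvd z (2 * n)).2 hi, a_zero]
  · rw [quaternionGroupLift_xa, mul_eq_one_iff_eq_inv, ← zpow_neg] at hi
    have hcomm : b * a = a * b := by rw [hi, ← zpow_add_one, ← zpow_one_add, add_comm]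
    have ha_inv : a = a⁻¹ := mul_right_cancel (hcomm.symm.trans hconj.eq)
    have ha_sq : a ^ 2 = 1 := by rw [sq, mul_eq_one_iff_eq_inv, ← ha_inv]
    have hdvd : 2 * n ∣ 2 * 1 := ha ▸ orderOf_dvd_of_pow_eq_one ha_sq
    exact absurd (Nat.dvd_one.1 (Nat.dvd_of_mul_dvd_mul_left two_pos hdvd)) hn

/-- Two elements satisfying the dicyclic relations, the first of the largest possible order,
generate a copy of the dicyclic group. -/
noncomputable def quaternionGroupEquivClosure (hn : n ≠ 1) (ha : orderOf a = 2 * n) :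
    QuaternionGroup n ≃* Subgroup.closure {a, b} :=
  (MonoidHom.ofInjective (quaternionGroupLift_injective hsq hconj hn ha)).trans
    (MulEquiv.subgroupCongr (range_quaternionGroupLift hsq hconj))

theorem coe_closure_pair_of_sq_eq_sq (hsq : b ^ 2 = a ^ 2) (hconj : SemiconjBy b a a⁻¹) :
    (Subgroup.closure {a, b} : Set G) =
      {1, a ^ 2, a, a ^ 2 * a, b, a ^ 2 * b, a * b, a ^ 2 * (a * b)} := by
  have huniv : (Set.univ : Set (QuaternionGroup 2)) =
      {1, .a 1 ^ 2, .a 1, .a 1 ^ 2 * .a 1, .xa 0, .a 1 ^ 2 * .xa 0, .a 1 * .xa 0,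
        .a 1 ^ 2 * (.a 1 * .xa 0)} := by
    rw [eq_comm, Set.eq_univ_iff_forall]
    decide
  rw [← range_quaternionGroupLift hsq hconj, MonoidHom.coe_range, ← Set.image_univ, huniv]
  simp only [Set.image_insert_eq, Set.image_singleton, map_one, map_mul, map_pow,
    quaternionGroupLift_a_one, quaternionGroupLift_xa_zero]

end Dicyclic

section QuotientNegation

variable {M : Type*} [AddGroup M] {A : AddSubgroup M} {f g ν : Equiv.Perm (M ⧸ A)}

theorem neg_mul_eq_of_mk {u : M → M} (hν : ∀ x : M, ν x = (-x : M)) (hf : ∀ x : M, f x = u x)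
    (hg : ∀ x : M, g x = (-u x : M)) : ν * f = g := by
  ext y
  obtain ⟨x, rfl⟩ := QuotientAddGroup.mk_surjective y
  rw [Equiv.Perm.mul_apply, hf, hν, hg]

theorem neg_ne_one_of_add_self_notMem (hν : ∀ x : M, ν x = (-x : M)) {x : M}
    (hx : x + x ∉ A) : ν ≠ 1 := by
  rintro rfl
  have hneg : ((-x : M) : M ⧸ A) = x := (hν x).symm
  rw [QuotientAddGroup.eq, neg_neg] at hneg
  exact hx hneg

end QuotientNegation

/-- The permutation `f` of `R ⧸ A` is the affine map `(q;r)`, that is `[x] ↦ [q * x + r]`. As a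
predicate on `f`, it does not require a proof that multiplication by `q` preserves `A`. -/
def IsAffineMod {R : Type*} [Ring R] (A : AddSubgroup R) (q r : R) (f : Equiv.Perm (R ⧸ A)) :
    Prop :=
  ∀ x : R, f x = (q * x + r : R)

namespace IsAffineMod

variable {R : Type*} [Ring R] {A : AddSubgroup R} {q q' r r' : R} {f g : Equiv.Perm (R ⧸ A)}

theorem of_mul (hf : ∀ x : R, f x = (q * x : R)) : IsAffineMod A q 0 f := fun x => by
  rw [hf, add_zero]

theorem of_neg (hf : ∀ x : R, f x = (-x : R)) : IsAffineMod A (-1) 0 f :=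
  of_mul fun x => by rw [hf, neg_one_mul]

theorem mul (hf : IsAffineMod A q r f) (hg : IsAffineMod A q' r' g) :
    IsAffineMod A (q * q') (q * r' + r) (f * g) := fun x => by
  rw [Equiv.Perm.mul_apply, hg, hf, mul_add, mul_assoc, add_assoc]

theorem eq_of_sub_mem (hf : IsAffineMod A q r f) (hg : IsAffineMod A q r' g) (h : r - r' ∈ A) :
    f = g := by
  ext y
  obtain ⟨x, rfl⟩ := QuotientAddGroup.mk_surjective y
  rw [hf, hg, QuotientAddGroup.eq_iff_sub_mem, add_sub_add_left_eq_sub]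
  exact h

end IsAffineMod

section Hurwitz

instance charZero_quaternion {R : Type*} [CommRing R] [CharZero R] : CharZero ℍ[R] :=
  charZero_of_injective_algebraMap (R := R) Quaternion.coe_injective

@[simp] theorem re_qi : qi.re = 0 := rfl
@[simp] theorem imI_qi : qi.imI = 1 := rfl
@[simp] theorem imJ_qi : qi.imJ = 0 := rfl
@[simp] theorem imK_qi : qi.imK = 0 := rfl

@[simp] theorem re_qj : qj.re = 0 := rfl
@[simp] theorem imI_qj : qj.imI = 0 := rfl
@[simp] theorem imJ_qj : qj.imJ = 1 := rfl
@[simp] theorem imK_qj : qj.imK = 0 := rfl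

@[simp] theorem re_qk : qk.re = 0 := rfl
@[simp] theorem imI_qk : qk.imI = 0 := rfl
@[simp] theorem imJ_qk : qk.imJ = 0 := rfl
@[simp] theorem imK_qk : qk.imK = 1 := rfl

theorem qi_mul_qi : qi * qi = -1 := by ext <;> simp

theorem qj_mul_qj : qj * qj = -1 := by ext <;> simp

theorem qi_mul_qj : qi * qj = qk := by ext <;> simp

theorem qj_mul_qi : qj * qi = -qk := by ext <;> simp

theorem qi_mul_qj_mul_qi : qi * (qj * qi) = qj := by
  rw [qj_mul_qi, ← qi_mul_qj, mul_neg, ← mul_assoc, qi_mul_qi, neg_one_mul, neg_neg]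

theorem qi_mul_qα_sub_qα : qi * qα - qα = -1 := by
  rw [qα, ← mul_div_assoc, ← sub_div, mul_add, mul_one, qi_mul_qi, div_eq_iff two_ne_zero]
  noncomm_ring

theorem qj_mul_qα_add_qα : qj * qα + qα = 1 + qi + qj - qt := by
  rw [qα, qt, ← mul_div_assoc, ← add_div, mul_add, mul_one, qj_mul_qi, eq_sub_iff_add_eq,
    ← add_div, div_eq_iff two_ne_zero]
  noncomm_ring

theorem re_qt : qt.re = 1 / 2 := by
  have hre : qt.re + qt.re = 1 := by
    rw [← Quaternion.re_add, qt, add_halves]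
    simp
  linarith

theorem qi_mul_qα_sub_qα_mem_hurwitz : qi * qα - qα ∈ hurwitz := by
  rw [qi_mul_qα_sub_qα]
  exact neg_mem (AddSubgroup.subset_closure (by simp))

theorem qj_mul_qα_add_qα_mem_hurwitz : qj * qα + qα ∈ hurwitz := by
  have hgen : {1, qi, qj, qt} ⊆ (hurwitz : Set ℍ[ℝ]) := AddSubgroup.subset_closure
  rw [qj_mul_qα_add_qα]
  exact sub_mem (add_mem (add_mem (hgen (by simp)) (hgen (by simp))) (hgen (by simp)))
    (hgen (by simp))

theorem exists_intCast_eq_two_mul_re_of_mem_hurwitz {x : ℍ[ℝ]} (hx : x ∈ hurwitz) :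
    ∃ m : ℤ, (m : ℝ) = 2 * x.re := by
  induction hx using AddSubgroup.closure_induction with
  | mem x hx =>
    rcases hx with rfl | rfl | rfl | rfl
    · exact ⟨2, by simp⟩
    · exact ⟨0, by simp⟩
    · exact ⟨0, by simp⟩
    · exact ⟨1, by simp [re_qt]⟩
  | zero => exact ⟨0, by simp⟩
  | add x y _ _ hx hy =>
    obtain ⟨m, hm⟩ := hx
    obtain ⟨l, hl⟩ := hy
    exact ⟨m + l, by simp [hm, hl, mul_add]⟩
  | neg x _ hx =>
    obtain ⟨m, hm⟩ := hx
    exact ⟨-m, by simp [hm]⟩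

theorem exists_add_self_notMem_hurwitz : ∃ x : ℍ[ℝ], x + x ∉ hurwitz := by
  refine ⟨((1 / 8 : ℝ) : ℍ[ℝ]), fun hx => ?_⟩
  obtain ⟨m, hm⟩ := exists_intCast_eq_two_mul_re_of_mem_hurwitz hx
  have htwo : (2 * m : ℝ) = 1 := by
    rw [hm, Quaternion.re_add, Quaternion.re_coe]
    norm_num
  have htwo_int : 2 * m = 1 := mod_cast htwo
  omega

variable {f g h : Equiv.Perm T}

theorem IsAffineMod.sq_eq_of_qi (hf : IsAffineMod hurwitz qi 0 f)
    (hg : IsAffineMod hurwitz (-1) 0 g) : f ^ 2 = g := by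
  have hmul := hf.mul hf
  rw [qi_mul_qi] at hmul
  rw [sq]
  exact hmul.eq_of_sub_mem hg (by simp)

theorem IsAffineMod.sq_eq_of_qj_qα (hf : IsAffineMod hurwitz qj qα f)
    (hg : IsAffineMod hurwitz (-1) 0 g) : f ^ 2 = g := by
  have hmul := hf.mul hf
  rw [qj_mul_qj] at hmul
  rw [sq]
  exact hmul.eq_of_sub_mem hg (by simpa using qj_mul_qα_add_qα_mem_hurwitz)

theorem IsAffineMod.mul_eq_of_qi_of_qj_qα (hf : IsAffineMod hurwitz qi 0 f)
    (hg : IsAffineMod hurwitz qj qα g) (hh : IsAffineMod hurwitz qk qα h) : f * g = h := by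
  have hmul := hf.mul hg
  rw [qi_mul_qj] at hmul
  exact hmul.eq_of_sub_mem hh (by simpa using qi_mul_qα_sub_qα_mem_hurwitz)

theorem IsAffineMod.semiconjBy_inv_of_qi_of_qj_qα (hf : IsAffineMod hurwitz qi 0 f)
    (hg : IsAffineMod hurwitz qj qα g) : SemiconjBy g f f⁻¹ := by
  have hmul := hf.mul (hg.mul hf)
  rw [qi_mul_qj_mul_qi] at hmul
  have hfgf : f * (g * f) = g :=
    hmul.eq_of_sub_mem hg (by simpa using qi_mul_qα_sub_qα_mem_hurwitz)
  exact eq_inv_mul_of_mul_eq hfgf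

end Hurwitz

theorem Qhat8_subgroup
    (fi fj fk fneg fnegi fnegj fnegk : Equiv.Perm T)
    (hfi : ∀ x : ℍ[ℝ], fi (π x) = π (qi * x))
    (hfj : ∀ x : ℍ[ℝ], fj (π x) = π (qj * x + qα))
    (hfk : ∀ x : ℍ[ℝ], fk (π x) = π (qk * x + qα))
    (hfneg : ∀ x : ℍ[ℝ], fneg (π x) = π (-x))
    (hfnegi : ∀ x : ℍ[ℝ], fnegi (π x) = π (-(qi * x)))
    (hfnegj : ∀ x : ℍ[ℝ], fnegj (π x) = π (-(qj * x + qα)))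
    (hfnegk : ∀ x : ℍ[ℝ], fnegk (π x) = π (-(qk * x + qα))) :
    ((Subgroup.closure ({fi, fj} : Set (Equiv.Perm T)) : Set (Equiv.Perm T)) =
      {1, fneg, fi, fnegi, fj, fnegj, fk, fnegk}) ∧
    Nat.card (Subgroup.closure ({fi, fj} : Set (Equiv.Perm T))) = 8 ∧
    Nonempty (Subgroup.closure ({fi, fj} : Set (Equiv.Perm T)) ≃* QuaternionGroup 2) ∧
    fj * fj = fneg ∧
    fi * fj = fk := by
  have hi : IsAffineMod hurwitz qi 0 fi := .of_mul hfi
  have hneg : IsAffineMod hurwitz (-1) 0 fneg := .of_neg hfneg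
  have hi_sq : fi ^ 2 = fneg := hi.sq_eq_of_qi hneg
  have hj : IsAffineMod hurwitz qj qα fj := hfj
  have hj_sq : fj ^ 2 = fneg := hj.sq_eq_of_qj_qα hneg
  have hij : fi * fj = fk := hi.mul_eq_of_qi_of_qj_qα hj hfk
  have hsq : fj ^ 2 = fi ^ 2 := hj_sq.trans hi_sq.symm
  have hconj : SemiconjBy fj fi fi⁻¹ := hi.semiconjBy_inv_of_qi_of_qj_qα hj
  have hi_order : orderOf fi = 2 * 2 := by
    obtain ⟨x, hx⟩ := exists_add_self_notMem_hurwitz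
    have hi_sq_ne : fi ^ 2 ≠ 1 := hi_sq ▸ neg_ne_one_of_add_self_notMem hfneg hx
    exact orderOf_eq_prime_pow (p := 2) (n := 1) hi_sq_ne
      (pow_two_mul_eq_one_of_sq_eq_pow hsq hconj)
  let e := quaternionGroupEquivClosure hsq hconj (by decide) hi_order
  refine ⟨?_, ?_, ⟨e.symm⟩, (sq fj).symm.trans hj_sq, hij⟩
  · rw [coe_closure_pair_of_sq_eq_sq hsq hconj, hi_sq, hij, neg_mul_eq_of_mk hfneg hfi hfnegi,
      neg_mul_eq_of_mk hfneg hfj hfnegj, neg_mul_eq_of_mk hfneg hfk hfnegk]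
  · rw [← Nat.card_congr e.toEquiv, Nat.card_eq_fintype_card, QuaternionGroup.card]
end

section
/- The subgroup T̂₂₄ of bijections of T = ℍ/𝔞 generated by Q̂₈ together with the affine map (t; s/2), where s = (1+i−j+k)/2, has order 24 and is isomorphic to SL₂(𝔽₃) (the binary tetrahedral group T₂₄). -/
/- STATEMENT 5: The subgroup T̂₂₄ of bijections of T = ℍ/𝔞 generated by Q̂₈ together
with the affine map (t; s/2), where s = (1+i−j+k)/2, has order 24 and is isomorphic to
SL₂(𝔽₃) (the binary tetrahedral group T₂₄). -/

open scoped Quaternion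

noncomputable def qs : ℍ[ℝ] := (1 + qi - qj + qk) / 2

/-!
Write `x, y, z` for the maps `(i;0)`, `(j;α)`, `(t;s/2)`. They satisfy the relations of the Hurwitz
units `i, j, t`, because the two sides of each relation have translation parts that are congruent
modulo `𝔞`. These relations make `⟨x⟩`, `⟨x, y⟩`, `⟨x, y, z⟩` a chain of subgroups, each normalized
by the next generator, with successive indices dividing `4`, `2`, `3`, so a group generated by such
a triple has order dividing `24`. The reductions of `i, j, t` modulo `3` satisfy them too and
generate `SL₂(𝔽₃)`, a group of order exactly `24`; hence the subgroup of `SL₂(𝔽₃) × Perm T`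
generated by the three pairs is the graph of a homomorphism. Its kernel is trivial, since every
nontrivial normal subgroup of `SL₂(𝔽₃)` contains `-1`, which goes to `x ^ 2 = (-1;0) ≠ id`.
-/

open Subgroup
open scoped MatrixGroups commutatorElement

section Group

variable {G : Type*} [Group G]

theorem relIndex_zpowers_dvd {H : Subgroup G} {g : G} {n : ℕ} (hgn : g ^ n ∈ H) :
    H.relIndex (zpowers g) ∣ n :=
  calc H.relIndex (zpowers g) = (H.comap (zpowersHom G g)).index := by
        rw [index_comap, range_zpowersHom]
    _ ∣ (zpowers (Multiplicative.ofAdd (n : ℤ))).index :=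
        index_dvd_of_le (zpowers_le_of_mem (by simpa using hgn))
    _ = n := Int.index_zmultiples n

theorem card_sup_zpowers_dvd {H : Subgroup G} {g : G} {n : ℕ}
    (hg : g ∈ normalizer (H : Set G)) (hgn : g ^ n ∈ H) :
    Nat.card ↥(H ⊔ zpowers g) ∣ Nat.card H * n := by
  have hle : zpowers g ≤ normalizer (H : Set G) := zpowers_le_of_mem hg
  have := normal_subgroupOf_of_le_normalizer hle
  have := normal_subgroupOf_sup_of_le_normalizer hle
  have hindex : H.relIndex (zpowers g) = H.relIndex (zpowers g ⊔ H) :=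
    Nat.card_congr (QuotientGroup.quotientInfEquivProdNormalizerQuotient _ _ hle).toEquiv
  rw [sup_comm, ← relIndex_bot_left, ← relIndex_mul_relIndex ⊥ H _ bot_le le_sup_right,
    ← hindex, relIndex_bot_left]
  exact mul_dvd_mul_left _ (relIndex_zpowers_dvd hgn)

theorem exists_monoidHom_of_card_le {S : Type*} [Group S] (D : Subgroup (S × G)) [Finite D]
    (hfst : D.map (MonoidHom.fst S G) = ⊤) (hcard : Nat.card D ≤ Nat.card S) :
    ∃ φ : S →* G, ∀ d ∈ D, φ d.1 = d.2 := by
  have hsurj : Function.Surjective (Prod.fst ∘ D.subtype) := fun s ↦ by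
    obtain ⟨d, hd, rfl⟩ : s ∈ D.map (MonoidHom.fst S G) := hfst ▸ mem_top s
    exact ⟨⟨d, hd⟩, rfl⟩
  have hbij : Function.Bijective (Prod.fst ∘ D.subtype) :=
    hsurj.bijective_of_nat_card_le hcard
  obtain ⟨φ, rfl⟩ := exists_eq_graph hbij
  exact ⟨φ, fun d hd ↦ MonoidHom.mem_graph.mp hd⟩

end Group

section BinaryTetrahedral

/-- Defining relations of the binary tetrahedral group: `x, y` satisfy those of the quaternion
group `Q₈`, and `z`, whose cube is the central element `x ^ 2`, permutes `x`, `y`, `x * y`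
cyclically by conjugation. They are written without inverses so that they make sense for the
quaternions `i, j, t` as well as for bijections and matrices. -/
structure IsBinaryTetrahedralTriple {M : Type*} [Monoid M] (x y z : M) : Prop where
  y_sq : y ^ 2 = x ^ 2
  x_mul_y_mul_x : x * y * x = y
  z_pow_three : z ^ 3 = x ^ 2
  z_mul_x : z * x = y * z
  z_mul_y : z * y = x * y * z

namespace IsBinaryTetrahedralTriple

theorem prodMk {M N : Type*} [Monoid M] [Monoid N] {x y z : M} {x' y' z' : N}
    (h : IsBinaryTetrahedralTriple x y z) (h' : IsBinaryTetrahedralTriple x' y' z') :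
    IsBinaryTetrahedralTriple (x, x') (y, y') (z, z') where
  y_sq := Prod.ext h.y_sq h'.y_sq
  x_mul_y_mul_x := Prod.ext h.x_mul_y_mul_x h'.x_mul_y_mul_x
  z_pow_three := Prod.ext h.z_pow_three h'.z_pow_three
  z_mul_x := Prod.ext h.z_mul_x h'.z_mul_x
  z_mul_y := Prod.ext h.z_mul_y h'.z_mul_y

variable {G : Type*} [Group G] {x y z : G}

theorem conj_y_x (h : IsBinaryTetrahedralTriple x y z) : y * x * y⁻¹ = x⁻¹ := by
  rw [mul_inv_eq_iff_eq_mul, eq_inv_mul_iff_mul_eq, ← mul_assoc, h.x_mul_y_mul_x]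

theorem x_pow_four (h : IsBinaryTetrahedralTriple x y z) : x ^ 4 = 1 := by
  have hinv : x ^ 2 = (x ^ 2)⁻¹ :=
    calc x ^ 2 = y * y ^ 2 * y⁻¹ := by rw [← h.y_sq]; group
      _ = (y * x * y⁻¹) ^ 2 := by rw [h.y_sq, conj_pow]
      _ = (x ^ 2)⁻¹ := by rw [h.conj_y_x, inv_pow]
  calc x ^ 4 = x ^ 2 * x ^ 2 := pow_add x 2 2
    _ = 1 := mul_eq_one_iff_eq_inv.mpr hinv

theorem y_mem_normalizer (h : IsBinaryTetrahedralTriple x y z) :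
    y ∈ normalizer (zpowers x : Set G) := by
  rw [mem_normalizer_iff_map_conj_eq, MonoidHom.map_zpowers]
  simp [h.conj_y_x]

theorem z_mem_normalizer (h : IsBinaryTetrahedralTriple x y z) :
    z ∈ normalizer (Subgroup.closure {x, y} : Set G) := by
  have hx : z * x * z⁻¹ = y := mul_inv_eq_of_eq_mul h.z_mul_x
  have hy : z * y * z⁻¹ = x * y := mul_inv_eq_of_eq_mul h.z_mul_y
  have hclosure : Subgroup.closure {y, x * y} = Subgroup.closure {x, y} := by
    have mem_x : x ∈ Subgroup.closure {x, y} := mem_closure_of_mem (by simp)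
    have mem_y : y ∈ Subgroup.closure {x, y} := mem_closure_of_mem (by simp)
    have mem_y' : y ∈ Subgroup.closure {y, x * y} := mem_closure_of_mem (by simp)
    have mem_xy : x * y ∈ Subgroup.closure {y, x * y} := mem_closure_of_mem (by simp)
    refine le_antisymm ?_ ?_ <;> simp only [closure_le, Set.pair_subset_iff, SetLike.mem_coe]
    · exact ⟨mem_y, mul_mem mem_x mem_y⟩
    · exact ⟨(mul_mem_cancel_right mem_y').mp mem_xy, mem_y'⟩
  rw [mem_normalizer_iff_map_conj_eq, MonoidHom.map_closure]
  simpa [Set.image_pair, hx, hy] using hclosure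

theorem card_closure_dvd (h : IsBinaryTetrahedralTriple x y z) :
    Nat.card (Subgroup.closure {x, y, z}) ∣ 24 := by
  have hcard_x : Nat.card (zpowers x) ∣ 4 := by
    rw [Nat.card_zpowers]
    exact orderOf_dvd_of_pow_eq_one h.x_pow_four
  have hcard_xy : Nat.card (Subgroup.closure {x, y}) ∣ 8 := by
    have hy : y ^ 2 ∈ zpowers x := h.y_sq ▸ npow_mem_zpowers x 2
    rw [Set.insert_eq, Subgroup.closure_union, ← zpowers_eq_closure, ← zpowers_eq_closure]
    exact (card_sup_zpowers_dvd h.y_mem_normalizer hy).trans (mul_dvd_mul_right hcard_x 2)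
  have hz : z ^ 3 ∈ Subgroup.closure {x, y} :=
    h.z_pow_three ▸ pow_mem (mem_closure_of_mem (by simp)) 2
  have hsup : Subgroup.closure {x, y, z} = Subgroup.closure {x, y} ⊔ zpowers z := by
    rw [zpowers_eq_closure, ← Subgroup.closure_union, Set.insert_union, Set.singleton_union]
  rw [hsup]
  exact (card_sup_zpowers_dvd h.z_mem_normalizer hz).trans (mul_dvd_mul_right hcard_xy 3)

end IsBinaryTetrahedralTriple

end BinaryTetrahedral

section SpecialLinear

/-- The image of `i` under the isomorphism `𝔞/3𝔞 ≃ M₂(𝔽₃)` with `i ↦ slI` and `j ↦ slJ`. -/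
def slI : SL(2, ZMod 3) := ⟨!![0, -1; 1, 0], by decide⟩

/-- The image of `j` under the isomorphism `𝔞/3𝔞 ≃ M₂(𝔽₃)` with `i ↦ slI` and `j ↦ slJ`. -/
def slJ : SL(2, ZMod 3) := ⟨!![1, 1; 1, -1], by decide⟩

/-- The image of `t` under the isomorphism `𝔞/3𝔞 ≃ M₂(𝔽₃)` with `i ↦ slI` and `j ↦ slJ`, that is,
the matrix `(1 + slI + slJ + slI * slJ) / 2`. -/
def slT : SL(2, ZMod 3) := ⟨!![-1, -1; 0, -1], by decide⟩

theorem isBinaryTetrahedralTriple_sl : IsBinaryTetrahedralTriple slI slJ slT := by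
  constructor <;> decide

theorem card_sl_two_zmod_three : Nat.card SL(2, ZMod 3) = 24 := by
  rw [Nat.card_eq_fintype_card]
  decide

theorem exists_eq_slI_pow_mul_slJ_pow_mul_slT_pow (g : SL(2, ZMod 3)) :
    ∃ (a : Fin 4) (b : Fin 2) (c : Fin 3), g = slI ^ a.val * slJ ^ b.val * slT ^ c.val := by
  revert g
  decide

theorem closure_slI_slJ_slT : Subgroup.closure {slI, slJ, slT} = ⊤ := by
  refine (eq_top_iff' _).mpr fun g ↦ ?_
  obtain ⟨a, b, c, rfl⟩ := exists_eq_slI_pow_mul_slJ_pow_mul_slT_pow g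
  refine mul_mem (mul_mem ?_ ?_) ?_ <;> exact pow_mem (mem_closure_of_mem (by simp)) _

-- The commutator of `slI` with an element of order 3 or 6 lies in `Q₈` but is not `±1`.
theorem eq_neg_one_or_sq_eq_neg_one_or_commutator_sq_eq_neg_one {g : SL(2, ZMod 3)}
    (hg : g ≠ 1) : g = -1 ∨ g ^ 2 = -1 ∨ ⁅g, slI⁆ ^ 2 = -1 := by
  revert g
  decide

theorem neg_one_mem_of_normal {N : Subgroup SL(2, ZMod 3)} [N.Normal] (hN : N ≠ ⊥) : -1 ∈ N := by
  obtain ⟨⟨g, hgN⟩, hg⟩ := N.ne_bot_iff_exists_ne_one.mp hN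
  have hcomm : ⁅g, slI⁆ ∈ N :=
    commutator_le_left N ⊤ (commutator_mem_commutator hgN (mem_top slI))
  rcases eq_neg_one_or_sq_eq_neg_one_or_commutator_sq_eq_neg_one (g := g) (by simpa using hg)
    with h | h | h
  · exact h ▸ hgN
  · exact h ▸ pow_mem hgN 2
  · exact h ▸ pow_mem hcomm 2

end SpecialLinear

theorem IsBinaryTetrahedralTriple.nonempty_mulEquiv_sl {G : Type*} [Group G] {x y z : G}
    (h : IsBinaryTetrahedralTriple x y z) (hx : x ^ 2 ≠ 1) :
    Nonempty (Subgroup.closure {x, y, z} ≃* SL(2, ZMod 3)) := by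
  let D : Subgroup (SL(2, ZMod 3) × G) := Subgroup.closure {(slI, x), (slJ, y), (slT, z)}
  have hD : Nat.card D ∣ 24 := (isBinaryTetrahedralTriple_sl.prodMk h).card_closure_dvd
  have : Finite D := Nat.finite_of_card_ne_zero (ne_zero_of_dvd_ne_zero (by simp) hD)
  obtain ⟨φ, hφ⟩ := exists_monoidHom_of_card_le D
    (by simp [D, MonoidHom.map_closure, Set.image_insert_eq, closure_slI_slJ_slT])
    (card_sl_two_zmod_three ▸ Nat.le_of_dvd (by simp) hD)
  have hφI : φ slI = x := hφ (slI, x) (mem_closure_of_mem (by simp))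
  have hφJ : φ slJ = y := hφ (slJ, y) (mem_closure_of_mem (by simp))
  have hφT : φ slT = z := hφ (slT, z) (mem_closure_of_mem (by simp))
  have hrange : φ.range = Subgroup.closure {x, y, z} := by
    rw [φ.range_eq_map, ← closure_slI_slJ_slT, MonoidHom.map_closure]
    simp [Set.image_insert_eq, hφI, hφJ, hφT]
  have hinj : Function.Injective φ := by
    rw [← φ.ker_eq_bot_iff]
    by_contra hker
    have hneg : slI ^ 2 ∈ φ.ker := by
      rw [show slI ^ 2 = -1 by decide]
      exact neg_one_mem_of_normal hker
    rw [MonoidHom.mem_ker, map_pow, hφI] at hneg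
    exact hx hneg
  exact ⟨hrange ▸ (MonoidHom.ofInjective hinj).symm⟩

section Affine

variable {R : Type*} [Ring R] {L : AddSubgroup R} {f f₁ f₂ : Equiv.Perm (R ⧸ L)}
  {q q₁ q₂ r r₁ r₂ : R}

/-- The permutation `f` of `R ⧸ L` is the affine map `(q;r) : [x] ↦ [q * x + r]`. -/
def IsAffinePerm (f : Equiv.Perm (R ⧸ L)) (q r : R) : Prop :=
  ∀ x : R, f (QuotientAddGroup.mk x) = QuotientAddGroup.mk (q * x + r)

namespace IsAffinePerm

theorem one : IsAffinePerm (1 : Equiv.Perm (R ⧸ L)) 1 0 := fun x ↦ by simp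

theorem mul (h₁ : IsAffinePerm f₁ q₁ r₁) (h₂ : IsAffinePerm f₂ q₂ r₂) :
    IsAffinePerm (f₁ * f₂) (q₁ * q₂) (q₁ * r₂ + r₁) := fun x ↦ by
  rw [Equiv.Perm.mul_apply, h₂, h₁, mul_add, mul_assoc, add_assoc]

theorem pow (hf : IsAffinePerm f q r) (n : ℕ) :
    IsAffinePerm (f ^ n) (q ^ n) ((∑ k ∈ Finset.range n, q ^ k) * r) := by
  induction n with
  | zero => simpa using one
  | succ n ih =>
    convert hf.mul ih using 1
    · exact pow_succ' f n
    · exact pow_succ' q n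
    · rw [geom_sum_succ, add_mul, one_mul, mul_assoc]

theorem eq_of_sub_mem (h₁ : IsAffinePerm f₁ q₁ r₁) (h₂ : IsAffinePerm f₂ q₂ r₂) (hq : q₁ = q₂)
    (hr : r₁ - r₂ ∈ L) : f₁ = f₂ := by
  ext v
  obtain ⟨x, rfl⟩ := QuotientAddGroup.mk_surjective v
  rw [h₁, h₂, hq, QuotientAddGroup.mk_add, QuotientAddGroup.mk_add,
    QuotientAddGroup.eq_iff_sub_mem.mpr hr]

theorem ne_one (hf : IsAffinePerm f q r) (hq : IsUnit (q - 1)) (hL : L ≠ ⊤) : f ≠ 1 := by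
  rintro rfl
  refine hL ((AddSubgroup.eq_top_iff' L).mpr fun v ↦ ?_)
  obtain ⟨x, hx⟩ : ∃ x, (q - 1) * x = v - r :=
    (IsUnit.isUnit_iff_mulLeft_bijective.mp hq).surjective _
  have hmem : q * x + r - x ∈ L := QuotientAddGroup.eq_iff_sub_mem.mp (hf x).symm
  convert hmem using 1
  rw [← sub_add_cancel v r, ← hx]
  noncomm_ring

end IsAffinePerm

end Affine

section Hurwitz

theorem quaternion_div_two (w : ℍ[ℝ]) : w / 2 = (2⁻¹ : ℝ) • w := by
  rw [div_eq_mul_inv, ← Quaternion.mul_coe_eq_smul, Quaternion.coe_inv]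
  rfl

theorem qi_components : qi.re = 0 ∧ qi.imI = 1 ∧ qi.imJ = 0 ∧ qi.imK = 0 := ⟨rfl, rfl, rfl, rfl⟩

theorem qj_components : qj.re = 0 ∧ qj.imI = 0 ∧ qj.imJ = 1 ∧ qj.imK = 0 := ⟨rfl, rfl, rfl, rfl⟩

theorem qk_components : qk.re = 0 ∧ qk.imI = 0 ∧ qk.imJ = 0 ∧ qk.imK = 1 := ⟨rfl, rfl, rfl, rfl⟩

theorem qt_components :
    qt.re = 1 / 2 ∧ qt.imI = 1 / 2 ∧ qt.imJ = 1 / 2 ∧ qt.imK = 1 / 2 := by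
  simp [qt, quaternion_div_two, qi_components, qj_components, qk_components]

theorem qα_components : qα.re = 1 / 2 ∧ qα.imI = 1 / 2 ∧ qα.imJ = 0 ∧ qα.imK = 0 := by
  simp [qα, quaternion_div_two, qi_components]

theorem qs_components :
    qs.re = 1 / 2 ∧ qs.imI = 1 / 2 ∧ qs.imJ = -1 / 2 ∧ qs.imK = 1 / 2 := by
  norm_num [qs, quaternion_div_two, qi_components, qj_components, qk_components]

theorem qi_sq : qi ^ 2 = -1 := by
  ext <;> simp [sq, qi_components]

theorem isUnit_neg_one_sub_one : IsUnit (-1 - 1 : ℍ[ℝ]) := by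
  simpa using (IsUnit.mk0 (-1 - 1 : ℝ) (by norm_num)).map (algebraMap ℝ ℍ[ℝ])

theorem isBinaryTetrahedralTriple_quaternion : IsBinaryTetrahedralTriple qi qj qt := by
  constructor <;> ext <;> norm_num [pow_succ, qi_components, qj_components, qt_components]

theorem one_mem_hurwitz : 1 ∈ hurwitz := AddSubgroup.subset_closure (by simp)

theorem qi_mem_hurwitz : qi ∈ hurwitz := AddSubgroup.subset_closure (by simp)

theorem qj_mem_hurwitz : qj ∈ hurwitz := AddSubgroup.subset_closure (by simp)

theorem qt_mem_hurwitz : qt ∈ hurwitz := AddSubgroup.subset_closure (by simp)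

theorem qk_mem_hurwitz : qk ∈ hurwitz := by
  have hqk : qk = qt + qt - 1 - qi - qj := by
    ext <;> norm_num [qi_components, qj_components, qk_components, qt_components]
  rw [hqk]
  exact sub_mem (sub_mem (sub_mem (add_mem qt_mem_hurwitz qt_mem_hurwitz) one_mem_hurwitz)
    qi_mem_hurwitz) qj_mem_hurwitz

theorem exists_two_mul_re_eq_intCast {w : ℍ[ℝ]} (hw : w ∈ hurwitz) :
    ∃ n : ℤ, 2 * w.re = n := by
  induction hw using AddSubgroup.closure_induction with
  | mem w hw =>
    rcases hw with rfl | rfl | rfl | rfl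
    · exact ⟨2, by simp⟩
    · exact ⟨0, by simp [qi_components]⟩
    · exact ⟨0, by simp [qj_components]⟩
    · exact ⟨1, by simp [qt_components]⟩
  | zero => exact ⟨0, by simp⟩
  | add u v _ _ hu hv =>
    obtain ⟨m, hm⟩ := hu
    obtain ⟨n, hn⟩ := hv
    exact ⟨m + n, by rw [Quaternion.re_add, mul_add, hm, hn, Int.cast_add]⟩
  | neg u _ hu =>
    obtain ⟨m, hm⟩ := hu
    exact ⟨-m, by rw [Quaternion.re_neg, mul_neg, hm, Int.cast_neg]⟩

theorem hurwitz_ne_top : hurwitz ≠ ⊤ := by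
  intro htop
  obtain ⟨n, hn⟩ : ∃ n : ℤ, 2 * ((1 / 4 : ℝ) : ℍ[ℝ]).re = n :=
    exists_two_mul_re_eq_intCast (htop ▸ AddSubgroup.mem_top _)
  have h : (2 * n : ℤ) = 1 := by
    rify
    rw [← hn, Quaternion.re_coe]
    norm_num
  lia

theorem one_add_qj_mul_qα : (1 + qj) * qα = qt - qk := by
  ext <;> norm_num [qj_components, qk_components, qt_components, qα_components]

theorem qi_mul_qα : qi * qα = qα - 1 := by
  ext <;> norm_num [qi_components, qα_components]

theorem one_add_qt_add_qt_sq_mul_qs_div_two : (1 + qt + qt ^ 2) * (qs / 2) = qi := by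
  ext <;> norm_num [sq, quaternion_div_two, qi_components, qt_components, qs_components]

theorem qj_mul_qs_div_two_add_qα : qj * (qs / 2) + qα = qs / 2 + (qt - qk) := by
  ext <;> norm_num [quaternion_div_two, qj_components, qk_components, qt_components,
    qα_components, qs_components]

theorem qt_mul_qα_add_qs_div_two :
    qt * qα + qs / 2 = qi * qj * (qs / 2) + qi * qα + 1 := by
  ext <;> norm_num [quaternion_div_two, qi_components, qj_components, qt_components,
    qα_components, qs_components]

theorem isBinaryTetrahedralTriple_perm {fi fj ft : Equiv.Perm T} (hi : IsAffinePerm fi qi 0)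
    (hj : IsAffinePerm fj qj qα) (ht : IsAffinePerm ft qt (qs / 2)) :
    IsBinaryTetrahedralTriple fi fj ft := by
  have hq := isBinaryTetrahedralTriple_quaternion
  constructor
  case y_sq =>
    refine (hj.pow 2).eq_of_sub_mem (hi.pow 2) hq.y_sq ?_
    simpa [Finset.sum_range_succ, one_add_qj_mul_qα] using sub_mem qt_mem_hurwitz qk_mem_hurwitz
  case x_mul_y_mul_x =>
    refine ((hi.mul hj).mul hi).eq_of_sub_mem hj hq.x_mul_y_mul_x ?_
    simpa [qi_mul_qα] using one_mem_hurwitz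
  case z_pow_three =>
    refine (ht.pow 3).eq_of_sub_mem (hi.pow 2) hq.z_pow_three ?_
    simpa [Finset.sum_range_succ, one_add_qt_add_qt_sq_mul_qs_div_two] using qi_mem_hurwitz
  case z_mul_x =>
    refine (ht.mul hi).eq_of_sub_mem (hj.mul ht) hq.z_mul_x ?_
    simpa [qj_mul_qs_div_two_add_qα] using sub_mem qk_mem_hurwitz qt_mem_hurwitz
  case z_mul_y =>
    refine (ht.mul hj).eq_of_sub_mem ((hi.mul hj).mul ht) hq.z_mul_y ?_
    simpa [qt_mul_qα_add_qs_div_two] using one_mem_hurwitz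

end Hurwitz

theorem That24_subgroup
    (fi fj ft : Equiv.Perm T)
    (hfi : ∀ x : ℍ[ℝ], fi (π x) = π (qi * x))
    (hfj : ∀ x : ℍ[ℝ], fj (π x) = π (qj * x + qα))
    (hft : ∀ x : ℍ[ℝ], ft (π x) = π (qt * x + qs / 2)) :
    Nat.card (Subgroup.closure
      (((Subgroup.closure ({fi, fj} : Set (Equiv.Perm T)) : Subgroup (Equiv.Perm T)) :
        Set (Equiv.Perm T)) ∪ {ft})) = 24 ∧
    Nonempty (Subgroup.closure
      (((Subgroup.closure ({fi, fj} : Set (Equiv.Perm T)) : Subgroup (Equiv.Perm T)) :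
        Set (Equiv.Perm T)) ∪ {ft}) ≃* Matrix.SpecialLinearGroup (Fin 2) (ZMod 3)) := by
  have hi : IsAffinePerm fi qi 0 := fun x ↦ (hfi x).trans (by rw [add_zero]; rfl)
  have htriple : IsBinaryTetrahedralTriple fi fj ft := isBinaryTetrahedralTriple_perm hi hfj hft
  have hneg : IsAffinePerm (fi ^ 2) (-1) _ := qi_sq ▸ hi.pow 2
  have hne : fi ^ 2 ≠ 1 := hneg.ne_one isUnit_neg_one_sub_one hurwitz_ne_top
  have hclosure : Subgroup.closure ((Subgroup.closure {fi, fj} : Set (Equiv.Perm T)) ∪ {ft}) =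
      Subgroup.closure {fi, fj, ft} := by
    rw [Subgroup.closure_union, Subgroup.closure_eq, ← Subgroup.closure_union, Set.insert_union,
      Set.singleton_union]
  obtain ⟨e⟩ := htriple.nonempty_mulEquiv_sl hne
  rw [hclosure]
  exact ⟨(Nat.card_congr e.toEquiv).trans card_sl_two_zmod_three, ⟨e⟩⟩
end
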